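/- Let 𝓔(θ) = α₁𝓔₁(θ) + α₂𝓔₂(θ) where, via Plancherel, 𝓔ᵢ(θ) = (1/2π)∫_{-∞}^{∞} mᵢ(τ)|f̂(ω+iτ)|²dτ with m₁(τ) = |ĥ(ω+iτ)|², m₂(τ) = |(ω+iτ)ĥ(ω+iτ)|², and f = θ−γ. If α₁ m₁(τ) + α₂ m₂(τ) ≥ c > 0 for all τ, then 𝓔(θ) ≥ c ‖θ−γ‖²_{L²(ρ)} even though inf_τ m₁(τ) = 0 and inf_τ m₂(τ) may be small: the combined weight can have a strictly positive infimum when neither single weight does. -/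

import Mathlib

open MeasureTheory Complex Real

/-- Laplace transform of a real function on `[0,∞)`. -/
noncomputable def laplace (f : ℝ → ℝ) (z : ℂ) : ℂ :=
  ∫ t in Set.Ioi (0 : ℝ), (f t : ℂ) * Complex.exp (-z * t)

/-- Causal convolution on `[0,∞)`. -/
noncomputable def conv (f h : ℝ → ℝ) (t : ℝ) : ℝ :=
  ∫ s in (0 : ℝ)..t, f (t - s) * h s

open scoped FourierTransform SchwartzMap Topology Convolution

lemma fourier_toLp_ae (F : ℝ → ℂ) (h1 : Integrable F) (h2 : MemLp F 2) :
    (𝓕 (h2.toLp F) : Lp ℂ 2 (volume : Measure ℝ)) =ᵐ[volume] 𝓕 F := by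
  have hcont : Continuous (𝓕 F) :=
    VectorFourier.fourierIntegral_continuous Real.continuous_fourierChar
      (by exact continuous_inner) h1
  apply ae_eq_of_integral_contDiff_smul_eq
  · exact (Lp.memLp _).locallyIntegrable (by norm_num)
  · exact hcont.locallyIntegrable
  · intro g g_smooth g_cpt
    have hg₁ : HasCompactSupport (Complex.ofRealCLM ∘ g) := g_cpt.comp_left rfl
    have hg₂ : ContDiff ℝ (⊤ : ℕ∞) (Complex.ofRealCLM ∘ g) := by fun_prop
    set φ : 𝓢(ℝ, ℂ) := hg₁.toSchwartzMap hg₂ with hφ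
    have hφa : ∀ x, φ x = (g x : ℂ) := fun x => by simp [hφ]
    have key := congrArg (fun T => T φ) (Lp.fourier_toTemperedDistribution_eq (h2.toLp F))
    simp only [TemperedDistribution.fourier_apply, Lp.toTemperedDistribution_apply] at key
    have e1 : ∫ x, g x • (𝓕 (h2.toLp F) : Lp ℂ 2 (volume : Measure ℝ)) x
        = ∫ x, φ x • (𝓕 (h2.toLp F) : Lp ℂ 2 (volume : Measure ℝ)) x := by
      simp only [hφa]; rfl
    have e2 : ∫ x, g x • 𝓕 F x = ∫ x, φ x • 𝓕 F x := by
      simp only [hφa]; rfl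
    rw [e1, e2, ← key]
    have e3 : ∫ x, (𝓕 φ) x • (h2.toLp F) x = ∫ x, (𝓕 φ) x • F x := by
      apply integral_congr_ae
      filter_upwards [h2.coeFn_toLp] with x hx
      rw [hx]
    rw [e3, SchwartzMap.fourier_coe]
    have := VectorFourier.integral_fourierIntegral_smul_eq_flip (μ := (volume : Measure ℝ))
      (ν := (volume : Measure ℝ)) (L := innerₗ ℝ) (f := φ) (g := F) Real.continuous_fourierChar
      (by exact continuous_inner) φ.integrable h1
    simp only [flip_innerₗ] at this
    exact this

lemma plancherel (F : ℝ → ℂ) (h1 : Integrable F) (h2 : MemLp F 2) :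
    Integrable (fun ξ => ‖𝓕 F ξ‖ ^ 2) ∧ ∫ ξ, ‖𝓕 F ξ‖ ^ 2 = ∫ t, ‖F t‖ ^ 2 := by
  have hae := fourier_toLp_ae F h1 h2
  have hm : MemLp (𝓕 F) 2 := (memLp_congr_ae hae).1 (Lp.memLp _)
  refine ⟨by simpa using hm.integrable_norm_pow (by norm_num), ?_⟩
  have hn := Lp.norm_fourier_eq (h2.toLp F)
  have hsq : ∀ G : Lp ℂ 2 (volume : Measure ℝ), ‖G‖ ^ 2 = ∫ t, ‖G t‖ ^ 2 := by
    intro G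
    have := L2.inner_def (𝕜 := ℂ) G G
    rw [inner_self_eq_norm_sq_to_K] at this
    have h3 : (fun t => inner ℂ (G t) (G t)) = fun t => ((‖G t‖ ^ 2 : ℝ) : ℂ) := by
      ext t; rw [inner_self_eq_norm_sq_to_K]; simp
    rw [h3, integral_complex_ofReal] at this
    apply Complex.ofReal_injective
    rw [← this]; simp
  have h4 := hsq (𝓕 (h2.toLp F))
  have h5 := hsq (h2.toLp F)
  rw [hn, h5] at h4
  have e1 : ∫ t, ‖(h2.toLp F) t‖ ^ 2 = ∫ t, ‖F t‖ ^ 2 := by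
    apply integral_congr_ae
    filter_upwards [h2.coeFn_toLp] with x hx
    rw [hx]
  have e2 : ∫ t, ‖(𝓕 (h2.toLp F) : Lp ℂ 2 (volume : Measure ℝ)) t‖ ^ 2 = ∫ t, ‖𝓕 F t‖ ^ 2 := by
    apply integral_congr_ae
    filter_upwards [hae] with x hx
    rw [hx]
  rw [← e1, ← e2, h4]

/-- Causal, exponentially damped extension. -/
noncomputable def ext0 (ω : ℝ) (u : ℝ → ℝ) : ℝ → ℂ :=
  Set.indicator (Set.Ioi 0) (fun t => ((u t * Real.exp (-ω * t) : ℝ) : ℂ))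

lemma ext0_integrable {ω σ C : ℝ} (hω : 0 < ω) (hσ : 0 < σ) (hC : 0 < C) {u : ℝ → ℝ}
    (hu : Continuous u) (hd : ∀ t : ℝ, 0 ≤ t → |u t| ≤ C * Real.exp (-σ * t)) :
    Integrable (ext0 ω u) ∧ ∀ t, ‖ext0 ω u t‖ ≤ C := by
  constructor
  · rw [ext0, integrable_indicator_iff measurableSet_Ioi]
    have : IntegrableOn (fun t => C * Real.exp (-ω * t)) (Set.Ioi 0) :=
      (integrableOn_exp_mul_Ioi (by linarith) 0).const_mul C
    refine Integrable.mono' this (by fun_prop) ?_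
    filter_upwards [ae_restrict_mem measurableSet_Ioi] with t ht
    have ht : 0 < t := ht
    rw [Complex.norm_real, Real.norm_eq_abs, abs_mul, abs_of_pos (Real.exp_pos _)]
    have := hd t ht.le
    have h2 : Real.exp (-σ * t) ≤ 1 := Real.exp_le_one_iff.2 (by nlinarith)
    gcongr
    nlinarith
  · intro t
    by_cases ht : t ∈ Set.Ioi (0:ℝ)
    · rw [ext0, Set.indicator_of_mem ht]
      have ht : 0 < t := ht
      rw [Complex.norm_real, Real.norm_eq_abs, abs_mul, abs_of_pos (Real.exp_pos _)]
      have := hd t ht.le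
      have h2 : Real.exp (-σ * t) ≤ 1 := Real.exp_le_one_iff.2 (by nlinarith)
      have h3 : Real.exp (-ω * t) ≤ 1 := Real.exp_le_one_iff.2 (by nlinarith)
      calc |u t| * Real.exp (-ω * t) ≤ C * 1 := by
            gcongr
            nlinarith
        _ = C := mul_one C
    · rw [ext0, Set.indicator_of_notMem ht]; simpa using hC.le

lemma fourier_ext0 (ω : ℝ) (u : ℝ → ℝ) (ξ : ℝ) :
    𝓕 (ext0 ω u) ξ = laplace u ((ω : ℂ) + ((2 * π * ξ : ℝ) : ℂ) * Complex.I) := by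
  rw [Real.fourier_real_eq_integral_exp_smul, laplace, ← integral_indicator measurableSet_Ioi]
  congr 1
  ext t
  by_cases ht : t ∈ Set.Ioi (0:ℝ)
  · rw [ext0, Set.indicator_of_mem ht, Set.indicator_of_mem ht]
    push_cast
    rw [smul_eq_mul, mul_comm, mul_assoc, ← Complex.exp_add]
    congr 2
    ring
  · rw [ext0, Set.indicator_of_notMem ht, Set.indicator_of_notMem ht]; simp

lemma ext0_conv (ω : ℝ) (f k : ℝ → ℝ) :
    ext0 ω (conv f k) = (ext0 ω k) ⋆[ContinuousLinearMap.mul ℂ ℂ] (ext0 ω f) := by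
  have h := posConvolution_eq_convolution_indicator
    (fun t => ((k t * Real.exp (-ω * t) : ℝ) : ℂ)) (fun t => ((f t * Real.exp (-ω * t) : ℝ) : ℂ))
    (ContinuousLinearMap.mul ℝ ℂ) volume
  have h2 : (ext0 ω k) ⋆[ContinuousLinearMap.mul ℂ ℂ] (ext0 ω f) =
     (ext0 ω k) ⋆[ContinuousLinearMap.mul ℝ ℂ] (ext0 ω f) := rfl
  rw [h2]
  unfold ext0
  rw [← h, posConvolution]
  congr 1
  ext t
  simp only [ContinuousLinearMap.mul_apply', conv]
  rw [← intervalIntegral.integral_mul_const, ← intervalIntegral.integral_ofReal]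
  congr 1
  ext s
  push_cast
  have : Complex.exp (-ω * t) = Complex.exp (-ω * s) * Complex.exp (-ω * (t - s)) := by
    rw [← Complex.exp_add]; congr 1; ring
  rw [this]; ring

lemma memLp_two_of_bdd {F : ℝ → ℂ} {M : ℝ} (h1 : Integrable F) (hb : ∀ t, ‖F t‖ ≤ M) :
    MemLp F 2 := by
  have hinf : MemLp F ⊤ := memLp_top_of_bound h1.1 M (.of_forall hb)
  rw [memLp_two_iff_integrable_sq_norm h1.1]
  have := h1.norm.bdd_mul (c := M) h1.norm.1 (.of_forall (by simpa using hb))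
  simpa [sq] using this

lemma conv_bdd {F K : ℝ → ℂ} {M : ℝ} (hK : Integrable K)
    (hb : ∀ t, ‖F t‖ ≤ M) (t : ℝ) :
    ‖(K ⋆[ContinuousLinearMap.mul ℂ ℂ] F) t‖ ≤ ∫ s, ‖K s‖ * M := by
  rw [convolution_def]
  refine norm_integral_le_of_norm_le (hK.norm.mul_const M) (.of_forall fun s => ?_)
  simp only [ContinuousLinearMap.mul_apply', norm_mul]
  gcongr
  exact hb _

lemma laplace_deriv {h : ℝ → ℝ} {ω σ C : ℝ} (hω : 0 < ω) (hσ : 0 < σ) (hC : 0 < C)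
    (hs : ContDiff ℝ (⊤ : ℕ∞) h)
    (hd : ∀ t : ℝ, 0 ≤ t → |h t| ≤ C * Real.exp (-σ * t))
    (hd' : ∀ t : ℝ, 0 ≤ t → |deriv h t| ≤ C * Real.exp (-σ * t)) (τ : ℝ) :
    laplace (deriv h) ((ω : ℂ) + τ * Complex.I) =
      ((ω : ℂ) + τ * Complex.I) * laplace h ((ω : ℂ) + τ * Complex.I) - h 0 := by
  set z : ℂ := (ω : ℂ) + τ * Complex.I with hz
  have hn : ∀ t : ℝ, ‖Complex.exp (-z * t)‖ = Real.exp (-ω * t) := by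
    intro t; rw [Complex.norm_exp]; simp [hz]
  have hint : ∀ u : ℝ → ℝ, Continuous u → (∀ t : ℝ, 0 ≤ t → |u t| ≤ C * Real.exp (-σ * t)) →
      IntegrableOn (fun t : ℝ => (u t : ℂ) * Complex.exp (-z * t)) (Set.Ioi 0) := by
    intro u hu hud
    have := (ext0_integrable hω hσ hC hu hud).1
    rw [ext0, integrable_indicator_iff measurableSet_Ioi] at this
    refine Integrable.mono this (by fun_prop) (.of_forall fun t => ?_)
    rw [norm_mul, hn, Complex.norm_real, Complex.norm_real, norm_mul, 
      Real.norm_of_nonneg (Real.exp_pos (-ω * t)).le]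
  have hcd : Continuous (deriv h) := hs.continuous_deriv (by simp)
  have i1 := hint h hs.continuous hd
  have i2 := hint _ hcd hd'
  have hder : ∀ t ∈ Set.Ici (0:ℝ), HasDerivAt (fun t : ℝ => (h t : ℂ) * Complex.exp (-z * t))
      (((deriv h t : ℝ) : ℂ) * Complex.exp (-z * t) - z * ((h t : ℂ) * Complex.exp (-z * t))) t := by
    intro t _
    have h1 : HasDerivAt (fun t : ℝ => (h t : ℂ)) ((deriv h t : ℝ) : ℂ) t :=
      ((hs.differentiable (by simp) t).hasDerivAt).ofReal_comp
    have h2 : HasDerivAt (fun t : ℝ => Complex.exp (-z * t)) (Complex.exp (-z * t) * (-z * 1)) t :=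
      (((hasDerivAt_id t).ofReal_comp).const_mul (-z)).cexp
    refine (h1.mul h2).congr_deriv ?_
    ring
  have hlim : Filter.Tendsto (fun t : ℝ => (h t : ℂ) * Complex.exp (-z * t)) Filter.atTop (𝓝 0) := by
    have hb : Filter.Tendsto (fun t : ℝ => C * Real.exp (-σ * t)) Filter.atTop (𝓝 0) := by
      have : Filter.Tendsto (fun t : ℝ => σ * t) Filter.atTop Filter.atTop :=
        Filter.tendsto_id.const_mul_atTop hσ
      have := (Real.tendsto_exp_neg_atTop_nhds_zero.comp this).const_mul C
      simpa [Function.comp_def] using this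
    refine squeeze_zero_norm' ?_ hb
    filter_upwards [Filter.eventually_ge_atTop 0] with t ht
    rw [norm_mul, hn, Complex.norm_real, Real.norm_eq_abs]
    have h3 : Real.exp (-ω * t) ≤ 1 := Real.exp_le_one_iff.2 (by nlinarith)
    nlinarith [hd t ht, abs_nonneg (h t)]
  have := integral_Ioi_of_hasDerivAt_of_tendsto' hder (i2.sub (i1.const_mul z)) hlim
  rw [integral_sub i2 (i1.const_mul z), integral_const_mul] at this
  simp only [laplace]
  simp at this
  simp
  linear_combination this

lemma conv_symm (f h : ℝ → ℝ) (t : ℝ) : conv f h t = ∫ s in (0:ℝ)..t, f s * h (t - s) := by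
  rw [conv]
  have := intervalIntegral.integral_comp_sub_left (a := 0) (b := t) (fun s => f s * h (t - s)) t
  simpa using this

lemma deriv_conv {f h : ℝ → ℝ} (hf : Continuous f) (hs : ContDiff ℝ (⊤ : ℕ∞) h) (x₀ : ℝ) :
    deriv (conv f h) x₀ = h 0 * f x₀ + conv f (deriv h) x₀ := by
  have hcd : Continuous (deriv h) := hs.continuous_deriv (by simp)
  have hc := hs.continuous
  have A : HasDerivAt (fun x => ∫ s in (0:ℝ)..x₀, f s * h (x - s))
      (∫ s in (0:ℝ)..x₀, f s * deriv h (x₀ - s)) x₀ := by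
    obtain ⟨B, hB⟩ := ((isCompact_closedBall x₀ 1).prod (isCompact_uIcc (a := 0) (b := x₀))).exists_bound_of_continuousOn
      (f := fun p : ℝ × ℝ => f p.2 * deriv h (p.1 - p.2)) (by fun_prop)
    refine (intervalIntegral.hasDerivAt_integral_of_dominated_loc_of_deriv_le
      (F' := fun x s => f s * deriv h (x - s)) (bound := fun _ => B)
      (Metric.closedBall_mem_nhds x₀ one_pos) (.of_forall fun x => by fun_prop)
      (by apply Continuous.intervalIntegrable; fun_prop) (by fun_prop) ?_ (by simp) ?_).2
    · refine .of_forall fun s hs' x hx => hB (x, s) ⟨hx, Set.uIoc_subset_uIcc hs'⟩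
    · refine .of_forall fun s hs' x hx => ?_
      have := ((hs.differentiable (by simp) (x - s)).hasDerivAt).comp_sub_const x s
      exact this.const_mul (f s)
  have Bd : HasDerivAt (fun x => ∫ s in x₀..x, f s * h (x - s)) (h 0 * f x₀) x₀ := by
    rw [hasDerivAt_iff_isLittleO, Asymptotics.isLittleO_iff]
    intro ε hε
    have hk : Continuous (fun p : ℝ × ℝ => f p.2 * h (p.1 - p.2)) := by fun_prop
    obtain ⟨δ, hδ, H⟩ := Metric.continuous_iff.1 hk (x₀, x₀) ε hε
    filter_upwards [Metric.ball_mem_nhds x₀ hδ] with x hx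
    rw [Metric.mem_ball, Real.dist_eq] at hx
    have e : ((∫ s in x₀..x, f s * h (x - s)) - ∫ s in x₀..x₀, f s * h (x₀ - s)) -
        (x - x₀) • (h 0 * f x₀) = ∫ s in x₀..x, (f s * h (x - s) - h 0 * f x₀) := by
      rw [intervalIntegral.integral_sub (by apply Continuous.intervalIntegrable; fun_prop) (by simp)]
      simp; ring
    rw [e]
    refine intervalIntegral.norm_integral_le_of_norm_le_const fun s hs' => ?_
    have hs2 : |s - x₀| ≤ |x - x₀| := Set.abs_sub_left_of_mem_uIcc (Set.uIoc_subset_uIcc hs')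
    have := H (x, s) (by
      rw [Prod.dist_eq, Real.dist_eq, Real.dist_eq]
      exact max_lt hx (hs2.trans_lt hx))
    rw [Real.dist_eq] at this
    simp only [sub_self] at this
    rw [Real.norm_eq_abs, mul_comm (h 0)]
    exact this.le
  have C := A.add Bd
  have e : conv f h = (fun x => ∫ s in (0:ℝ)..x₀, f s * h (x - s)) +
      (fun x => ∫ s in x₀..x, f s * h (x - s)) := by
    ext x
    rw [conv_symm, Pi.add_apply, intervalIntegral.integral_add_adjacent_intervals] <;>
    · apply Continuous.intervalIntegrable; fun_prop
  rw [e, C.deriv, conv_symm]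
  ring

lemma integral_ext0 (ω : ℝ) (u : ℝ → ℝ) :
    ∫ t, ‖ext0 ω u t‖ ^ 2 = ∫ t in Set.Ioi (0:ℝ), u t ^ 2 * Real.exp (-2 * ω * t) := by
  rw [← integral_indicator measurableSet_Ioi]
  congr 1
  ext t
  by_cases ht : t ∈ Set.Ioi (0:ℝ)
  · rw [ext0, Set.indicator_of_mem ht, Set.indicator_of_mem ht, Complex.norm_real,
      Real.norm_eq_abs, sq_abs, mul_pow, ← Real.exp_nat_mul]
    congr 2; push_cast; ring
  · rw [ext0, Set.indicator_of_notMem ht, Set.indicator_of_notMem ht]; simp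

lemma integrable_ext0_sq {ω : ℝ} {u : ℝ → ℝ} (h : MemLp (ext0 ω u) 2) :
    IntegrableOn (fun t => u t ^ 2 * Real.exp (-2 * ω * t)) (Set.Ioi (0:ℝ)) := by
  have h2 := (memLp_two_iff_integrable_sq_norm h.1).1 h
  rw [← integrable_indicator_iff measurableSet_Ioi]
  refine h2.congr (.of_forall fun t => Eq.symm ?_)
  beta_reduce
  by_cases ht : t ∈ Set.Ioi (0:ℝ)
  · rw [ext0, Set.indicator_of_mem ht, Set.indicator_of_mem ht, Complex.norm_real,
      Real.norm_eq_abs, sq_abs, mul_pow, ← Real.exp_nat_mul]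
    congr 2; push_cast; ring
  · rw [ext0, Set.indicator_of_notMem ht, Set.indicator_of_notMem ht]; simp

/-- **Coercivity of the combined loss `𝓔 = α₁𝓔₁ + α₂𝓔₂`.** If the combined
spectral weight `α₁|ĥ(ω+iτ)|² + α₂|(ω+iτ)ĥ(ω+iτ)|²` has a uniform positive
lower bound `c` in `τ`, then `𝓔(θ) ≥ c‖θ−γ‖²_{L²(ρ)}` — even though neither
single weight `m₁(τ) = |ĥ(ω+iτ)|²` nor `m₂(τ) = |(ω+iτ)ĥ(ω+iτ)|²` need have a
positive infimum. -/
theorem combined_loss_coercive (γ θ h : ℝ → ℝ) (Cd σ α₁ α₂ ω c : ℝ)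
    (hCd : 0 < Cd) (hσ : 0 < σ) (hα₁ : 0 < α₁) (hα₂ : 0 < α₂) (hα : α₁ + α₂ = 1)
    (hω : 0 < ω) (hc : 0 < c)
    (hsmoothγ : ContDiff ℝ (⊤ : ℕ∞) γ) (hsmoothθ : ContDiff ℝ (⊤ : ℕ∞) θ) (hsmoothh : ContDiff ℝ (⊤ : ℕ∞) h)
    (hdecayγ : ∀ t : ℝ, 0 ≤ t → |γ t| ≤ Cd * Real.exp (-σ * t))
    (hdecayθ : ∀ t : ℝ, 0 ≤ t → |θ t| ≤ Cd * Real.exp (-σ * t))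
    (hdecayh : ∀ t : ℝ, 0 ≤ t → |h t| ≤ Cd * Real.exp (-σ * t))
    (hdecayh' : ∀ t : ℝ, 0 ≤ t → |deriv h t| ≤ Cd * Real.exp (-σ * t))
    (hlower : ∀ τ : ℝ,
      c ≤ α₁ * ‖laplace h ((ω : ℂ) + τ * Complex.I)‖ ^ 2 +
            α₂ * ‖((ω : ℂ) + τ * Complex.I) * laplace h ((ω : ℂ) + τ * Complex.I)‖ ^ 2) :
    c * (∫ t in Set.Ioi (0 : ℝ), (θ t - γ t) ^ 2 * Real.exp (-2 * ω * t))
      ≤ ∫ t in Set.Ioi (0 : ℝ),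
          (α₁ * (conv (fun s => θ s - γ s) h t) ^ 2 +
            α₂ * (deriv (conv (fun s => θ s - γ s) h) t) ^ 2) *
            Real.exp (-2 * ω * t) := by
  set f : ℝ → ℝ := fun s => θ s - γ s with hf
  have hfc : Continuous f := hsmoothθ.continuous.sub hsmoothγ.continuous
  have hfd : ∀ t : ℝ, 0 ≤ t → |f t| ≤ (2 * Cd) * Real.exp (-σ * t) := by
    intro t ht
    have := abs_sub (θ t) (γ t)
    have h1 := hdecayγ t ht
    have h2 := hdecayθ t ht
    simp only [hf]
    linarith
  have hcd : Continuous (deriv h) := hsmoothh.continuous_deriv (by simp)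
  obtain ⟨Fi, Fb⟩ := ext0_integrable hω hσ (by linarith) hfc hfd
  obtain ⟨Hi, -⟩ := ext0_integrable hω hσ hCd hsmoothh.continuous hdecayh
  obtain ⟨Ki, -⟩ := ext0_integrable hω hσ hCd hcd hdecayh'
  have F2 := memLp_two_of_bdd Fi Fb
  have Gi : Integrable (ext0 ω (conv f h)) := by
    rw [ext0_conv]; exact Hi.integrable_convolution _ Fi
  have G2 : MemLp (ext0 ω (conv f h)) 2 := by
    refine memLp_two_of_bdd (M := ∫ s, ‖ext0 ω h s‖ * (2 * Cd)) Gi (fun t => ?_)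
    rw [ext0_conv]; exact conv_bdd Hi Fb t
  have Li : Integrable (ext0 ω (conv f (deriv h))) := by
    rw [ext0_conv]; exact Ki.integrable_convolution _ Fi
  have L2 : MemLp (ext0 ω (conv f (deriv h))) 2 := by
    refine memLp_two_of_bdd (M := ∫ s, ‖ext0 ω (deriv h) s‖ * (2 * Cd)) Li (fun t => ?_)
    rw [ext0_conv]; exact conv_bdd Ki Fb t
  have hD : ext0 ω (deriv (conv f h)) =
      (h 0 : ℂ) • ext0 ω f + ext0 ω (conv f (deriv h)) := by
    ext t
    by_cases ht : t ∈ Set.Ioi (0:ℝ)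
    · simp only [ext0, Pi.add_apply, Pi.smul_apply, Set.indicator_of_mem ht,
        deriv_conv hfc hsmoothh]
      push_cast
      rw [smul_eq_mul]
      ring
    · simp [ext0, Set.indicator_of_notMem ht]
  have Di : Integrable (ext0 ω (deriv (conv f h))) := by
    rw [hD]; exact (Fi.smul _).add Li
  have D2 : MemLp (ext0 ω (deriv (conv f h))) 2 := by
    rw [hD]; exact (F2.const_smul _).add L2
  obtain ⟨pFi, pF⟩ := plancherel _ Fi F2
  obtain ⟨pGi, pG⟩ := plancherel _ Gi G2
  obtain ⟨pDi, pD⟩ := plancherel _ Di D2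
  have hFG : ∀ ξ, 𝓕 (ext0 ω (conv f h)) ξ =
      laplace h ((ω : ℂ) + ((2 * π * ξ : ℝ) : ℂ) * Complex.I) * 𝓕 (ext0 ω f) ξ := by
    intro ξ
    rw [ext0_conv, Real.fourier_mul_convolution_eq Hi Fi, fourier_ext0 ω h]
  have hFD : ∀ ξ, 𝓕 (ext0 ω (deriv (conv f h))) ξ =
      (((ω : ℂ) + ((2 * π * ξ : ℝ) : ℂ) * Complex.I) *
        laplace h ((ω : ℂ) + ((2 * π * ξ : ℝ) : ℂ) * Complex.I)) * 𝓕 (ext0 ω f) ξ := by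
    intro ξ
    have e1 : 𝓕 ((h 0 : ℂ) • ext0 ω f + ext0 ω (conv f (deriv h))) ξ =
        (h 0 : ℂ) * 𝓕 (ext0 ω f) ξ + 𝓕 (ext0 ω (conv f (deriv h))) ξ := by
      have a1 := VectorFourier.fourierIntegral_add (L := innerₗ ℝ) Real.continuous_fourierChar
        (by exact continuous_inner) (Fi.smul (h 0 : ℂ)) Li
      have a2 := VectorFourier.fourierIntegral_const_smul Real.fourierChar volume (innerₗ ℝ)
        (ext0 ω f) (h 0 : ℂ)
      have a3 := congrFun a1 ξ
      rw [a2] at a3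
      exact a3
    rw [hD, e1, ext0_conv, Real.fourier_mul_convolution_eq Ki Fi, fourier_ext0 ω (deriv h),
      laplace_deriv hω hσ hCd hsmoothh hdecayh hdecayh']
    ring
  have hR : ∫ t in Set.Ioi (0 : ℝ), (α₁ * (conv f h t) ^ 2 + α₂ * (deriv (conv f h) t) ^ 2) *
            Real.exp (-2 * ω * t) =
      α₁ * (∫ ξ, ‖𝓕 (ext0 ω (conv f h)) ξ‖ ^ 2) +
        α₂ * ∫ ξ, ‖𝓕 (ext0 ω (deriv (conv f h))) ξ‖ ^ 2 := by
    rw [pG, pD, integral_ext0, integral_ext0, ← integral_const_mul, ← integral_const_mul,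
      ← integral_add ((integrable_ext0_sq G2).const_mul _) ((integrable_ext0_sq D2).const_mul _)]
    congr 1
    ext t
    ring
  have hL : ∫ t in Set.Ioi (0 : ℝ), (θ t - γ t) ^ 2 * Real.exp (-2 * ω * t) =
      ∫ ξ, ‖𝓕 (ext0 ω f) ξ‖ ^ 2 := by
    rw [pF, integral_ext0]
  rw [hR, hL, ← integral_const_mul, ← integral_const_mul, ← integral_const_mul,
    ← integral_add (pGi.const_mul _) (pDi.const_mul _)]
  refine integral_mono (pFi.const_mul _) ((pGi.const_mul _).add (pDi.const_mul _)) fun ξ => ?_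
  have := hlower (2 * π * ξ)
  rw [hFG, hFD, norm_mul _ (𝓕 (ext0 ω f) ξ), norm_mul _ (𝓕 (ext0 ω f) ξ), mul_pow, mul_pow]
  nlinarith [mul_le_mul_of_nonneg_right this (sq_nonneg ‖𝓕 (ext0 ω f) ξ‖)]
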